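/- Let D be a finite digraph without loops, let k be an integer, and let S be a global offensive k-alliance in D. Then Δ⁺(D)·|S| ≥ Σ_{v ∉ S} deg⁻_S(v) ≥ Σ_{v ∉ S} (deg⁻_{V(D)\S}(v) + k) ≥ (k + δ⁻(D))·|V(D)\S| − Δ⁺(D)·|S|, where the middle sums run over all vertices outside S. -/

import Mathlib

open Finset

variable {V : Type*}

/-- In-degree of `v` from the set `T` in the digraph with arc relation `A`. -/
def inDegOn [Fintype V] (A : V → V → Prop) [DecidableRel A] (T : Finset V) (v : V) : ℕ :=
  (T.filter fun u => A u v).card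

/-- Out-degree of `v` to the set `T` in the digraph with arc relation `A`. -/
def outDegOn [Fintype V] (A : V → V → Prop) [DecidableRel A] (T : Finset V) (v : V) : ℕ :=
  (T.filter fun w => A v w).card

/-- `S` is a global offensive `k`-alliance in the digraph with arc relation `A`. -/
def GOkA [Fintype V] [DecidableEq V] (A : V → V → Prop) [DecidableRel A] (k : ℤ)
    (S : Finset V) : Prop :=
  ∀ v ∉ S, (∃ u ∈ S, A u v) ∧ ((inDegOn A Sᶜ v : ℤ) + k ≤ (inDegOn A S v : ℤ))

/-- The global offensive `k`-alliance number of a digraph. -/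
noncomputable def goNum [Fintype V] [DecidableEq V] (A : V → V → Prop) [DecidableRel A]
    (k : ℤ) : ℕ :=
  sInf {m | ∃ S : Finset V, GOkA A k S ∧ S.card = m}

/-- Maximum out-degree `Δ⁺`. -/
def maxOutDeg [Fintype V] (A : V → V → Prop) [DecidableRel A] : ℕ :=
  univ.sup fun v => outDegOn A univ v

/-- Maximum in-degree `Δ⁻`. -/
def maxInDeg [Fintype V] (A : V → V → Prop) [DecidableRel A] : ℕ :=
  univ.sup fun v => inDegOn A univ v

/-- Minimum in-degree `δ⁻`. -/
def minInDeg [Fintype V] [Nonempty V] (A : V → V → Prop) [DecidableRel A] : ℕ :=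
  univ.inf' univ_nonempty fun v => inDegOn A univ v

/-!
Both outer inequalities come from counting the arcs with tail in `S`: every vertex emits at
most `Δ⁺` of them, so `∑ deg⁻_S ≤ Δ⁺ |S|` over any set of vertices. Every vertex receives at least
`δ⁻` arcs in total, so at least `δ⁻ |T| - Δ⁺ |S|` arcs enter a set `T` from outside `S`.
-/

section

variable [Fintype V] (A : V → V → Prop) [DecidableRel A]

theorem sum_inDegOn_eq_sum_outDegOn (S T : Finset V) :
    ∑ v ∈ T, inDegOn A S v = ∑ u ∈ S, outDegOn A T u :=
  (sum_card_bipartiteAbove_eq_sum_card_bipartiteBelow A).symm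

theorem outDegOn_le_maxOutDeg (T : Finset V) (u : V) : outDegOn A T u ≤ maxOutDeg A :=
  calc
    outDegOn A T u ≤ outDegOn A univ u := card_le_card (filter_subset_filter _ (subset_univ T))
    _ ≤ maxOutDeg A := le_sup (f := fun v => outDegOn A univ v) (mem_univ u)

theorem sum_inDegOn_le_maxOutDeg_mul_card (S T : Finset V) :
    ∑ v ∈ T, inDegOn A S v ≤ maxOutDeg A * #S :=
  calc
    ∑ v ∈ T, inDegOn A S v = ∑ u ∈ S, outDegOn A T u := sum_inDegOn_eq_sum_outDegOn A S T
    _ ≤ #S * maxOutDeg A := sum_le_card_nsmul S _ _ fun u _ => outDegOn_le_maxOutDeg A T u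
    _ = maxOutDeg A * #S := mul_comm _ _

theorem minInDeg_le_inDegOn_univ [Nonempty V] (v : V) : minInDeg A ≤ inDegOn A univ v :=
  inf'_le (fun v => inDegOn A univ v) (mem_univ v)

variable [DecidableEq V]

theorem inDegOn_add_inDegOn_compl (S : Finset V) (v : V) :
    inDegOn A S v + inDegOn A Sᶜ v = inDegOn A univ v := by
  simp only [inDegOn, card_filter]
  exact sum_add_sum_compl S _

theorem minInDeg_mul_card_le_add_sum_inDegOn_compl [Nonempty V] (S T : Finset V) :
    minInDeg A * #T ≤ maxOutDeg A * #S + ∑ v ∈ T, inDegOn A Sᶜ v :=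
  calc
    minInDeg A * #T = #T * minInDeg A := mul_comm _ _
    _ ≤ ∑ v ∈ T, inDegOn A univ v :=
      card_nsmul_le_sum T _ _ fun v _ => minInDeg_le_inDegOn_univ A v
    _ = ∑ v ∈ T, inDegOn A S v + ∑ v ∈ T, inDegOn A Sᶜ v := by
      simp only [← inDegOn_add_inDegOn_compl A S, sum_add_distrib]
    _ ≤ maxOutDeg A * #S + ∑ v ∈ T, inDegOn A Sᶜ v := by
      gcongr
      exact sum_inDegOn_le_maxOutDeg_mul_card A S T

/-- Taking for `T` the out-neighbours of `S` outside `S` covers offensive `k`-alliances that are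
not global. -/
theorem goka_inequality_chain_general [Nonempty V] (k : ℤ) (S T : Finset V)
    (hST : ∀ v ∈ T, (inDegOn A Sᶜ v : ℤ) + k ≤ inDegOn A S v) :
    ((maxOutDeg A : ℤ) * #S ≥ ∑ v ∈ T, (inDegOn A S v : ℤ)) ∧
    (∑ v ∈ T, (inDegOn A S v : ℤ) ≥ ∑ v ∈ T, ((inDegOn A Sᶜ v : ℤ) + k)) ∧
    (∑ v ∈ T, ((inDegOn A Sᶜ v : ℤ) + k) ≥
      (k + (minInDeg A : ℤ)) * #T - (maxOutDeg A : ℤ) * #S) := by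
  refine ⟨mod_cast sum_inDegOn_le_maxOutDeg_mul_card A S T, sum_le_sum hST, ?_⟩
  have hcount : (minInDeg A : ℤ) * #T ≤ maxOutDeg A * #S + ∑ v ∈ T, (inDegOn A Sᶜ v : ℤ) :=
    mod_cast minInDeg_mul_card_le_add_sum_inDegOn_compl A S T
  rw [sum_add_distrib, sum_const, nsmul_eq_mul]
  linarith

end

/-- For any global offensive `k`-alliance `S` in a digraph `D`:
`Δ⁺·|S| ≥ Σ_{v ∉ S} deg⁻_S(v) ≥ Σ_{v ∉ S} (deg⁻_{S̄}(v) + k) ≥ (k + δ⁻)·|S̄| − Δ⁺·|S|`. -/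
theorem goka_inequality_chain [Fintype V] [DecidableEq V] [Nonempty V]
    (A : V → V → Prop) [DecidableRel A] (hloopless : ∀ v, ¬ A v v) (k : ℤ)
    (S : Finset V) (hS : GOkA A k S) :
    ((maxOutDeg A : ℤ) * S.card ≥ ∑ v ∈ Sᶜ, (inDegOn A S v : ℤ)) ∧
    (∑ v ∈ Sᶜ, (inDegOn A S v : ℤ) ≥ ∑ v ∈ Sᶜ, ((inDegOn A Sᶜ v : ℤ) + k)) ∧
    (∑ v ∈ Sᶜ, ((inDegOn A Sᶜ v : ℤ) + k) ≥
      (k + (minInDeg A : ℤ)) * Sᶜ.card - (maxOutDeg A : ℤ) * S.card) :=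
  goka_inequality_chain_general A k S Sᶜ fun v hv => (hS v (mem_compl.mp hv)).2
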